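/- arXiv:2104.09381 — 3 statements merged into one kernel-verified Lean document; each statement's English description precedes it below -/
import Mathlib

section
/- (Voltage Collapse) Let E>0, g_l>0, n ≥ 1, and nominal demands P_{0,i} ≥ 0 with Σ_{i=1}^n P_{0,i} > E²·g_l/4. Suppose g : [0,∞) → ℝⁿ is differentiable, g_i(t) ≥ 0 for all i and all t ≥ 0, and g_i'(t) = P_{0,i} − v(g(t))²·g_i(t) for all t ≥ 0 and all i, where v(g) = E·g_l/(Σ_{j=1}^n g_j + g_l). Then Σ_{i=1}^n g_i(t) → ∞ as t → ∞, and consequently v(g(t)) → 0 as t → ∞; i.e., the system undergoes voltage collapse. -/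
/-!
The loads jointly draw the power `v² ∑ gᵢ = E² g_l · (S g_l / (S + g_l)²)`, where `S = ∑ gᵢ`. By
AM-GM this never exceeds the capacity `E² g_l / 4`. Hence, as soon as the total demand exceeds the
capacity, `S` grows at a rate bounded below by the positive excess demand.
-/

open Filter Topology

theorem tendsto_atTop_of_eventually_le_deriv {f : ℝ → ℝ} {c : ℝ} (hc : 0 < c)
    (hf : ∀ᶠ t in atTop, c ≤ deriv f t) : Tendsto f atTop atTop := by
  obtain ⟨a, ha⟩ := eventually_atTop.1 hf
  have hdiff : ∀ t ∈ Set.Ici a, DifferentiableAt ℝ f t := fun t ht =>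
    differentiableAt_of_deriv_ne_zero (hc.trans_le (ha t ht)).ne'
  have hlinear : ∀ t ∈ Set.Ici a, c * (t - a) ≤ f t - f a := fun t ht =>
    (convex_Ici a).mul_sub_le_image_sub_of_le_deriv
      (fun s hs => (hdiff s hs).continuousAt.continuousWithinAt)
      (fun s hs => (hdiff s (interior_subset hs)).differentiableWithinAt)
      (fun s hs => ha s (interior_subset hs)) a Set.self_mem_Ici t ht ht
  have hline : Tendsto (fun t => f a + c * (t - a)) atTop atTop :=
    tendsto_atTop_add_const_left _ _
      ((tendsto_atTop_add_const_right _ (-a) tendsto_id).const_mul_atTop hc)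
  refine tendsto_atTop_mono' _ ?_ hline
  filter_upwards [eventually_ge_atTop a] with t ht
  linarith [hlinear t ht]

section StarNetwork

variable {ι : Type*} [Fintype ι] {E gl : ℝ}

/-- The common voltage `v(g)` of the loads in a star DC network with source voltage `E`, line
conductance `gl` and load conductances `g`. -/
noncomputable def loadVoltage (E gl : ℝ) (g : ι → ℝ) : ℝ :=
  E * gl / ((∑ i, g i) + gl)

-- When `∑ i, g i + gl = 0`, the convention `x / 0 = 0` makes the left-hand side zero.
theorem loadVoltage_sq_mul_sum_le (hgl : 0 ≤ gl) (g : ι → ℝ) :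
    loadVoltage E gl g ^ 2 * ∑ i, g i ≤ E ^ 2 * gl / 4 := by
  set S := ∑ i, g i with hS
  calc loadVoltage E gl g ^ 2 * S
      = E ^ 2 * gl / 4 * (4 * S * gl / (S + gl) ^ 2) := by rw [loadVoltage, ← hS, div_pow]; ring
    _ ≤ E ^ 2 * gl / 4 :=
        mul_le_of_le_one_right (by positivity)
          (div_le_one_of_le₀ (four_mul_le_sq_add S gl) (sq_nonneg _))

theorem tendsto_loadVoltage_zero {α : Type*} {l : Filter α} {g : α → ι → ℝ}
    (hg : Tendsto (fun t => ∑ i, g t i) l atTop) :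
    Tendsto (fun t => loadVoltage E gl (g t)) l (𝓝 0) :=
  (tendsto_atTop_add_const_right _ gl hg).const_div_atTop _

theorem stmt_2_general (hgl : 0 ≤ gl) {P0 : ι → ℝ} (hover : E ^ 2 * gl / 4 < ∑ i, P0 i)
    {g : ℝ → ι → ℝ}
    (hdyn : ∀ᶠ t in atTop, ∀ i,
      HasDerivAt (fun s => g s i) (P0 i - loadVoltage E gl (g t) ^ 2 * g t i) t) :
    Tendsto (fun t => ∑ i, g t i) atTop atTop ∧
    Tendsto (fun t => loadVoltage E gl (g t)) atTop (𝓝 0) := by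
  suffices hsum : Tendsto (fun t => ∑ i, g t i) atTop atTop from
    ⟨hsum, tendsto_loadVoltage_zero hsum⟩
  refine tendsto_atTop_of_eventually_le_deriv (sub_pos.2 hover) ?_
  filter_upwards [hdyn] with t ht
  rw [(HasDerivAt.fun_sum fun i _ => ht i).deriv, Finset.sum_sub_distrib, ← Finset.mul_sum]
  exact sub_le_sub_left (loadVoltage_sq_mul_sum_le hgl (g t)) _

end StarNetwork

/-- Voltage collapse: if the total demand exceeds the network capacity `E²·g_l/4`, then under
the constant-power load dynamics the total conductance grows unboundedly and the voltage
`v(g(t)) = E·g_l/(Σᵢ gᵢ(t) + g_l)` tends to zero. -/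
theorem stmt_2 (E gl : ℝ) (hE : 0 < E) (hgl : 0 < gl) (n : ℕ) (hn : 1 ≤ n)
    (P0 : Fin n → ℝ) (hP0 : ∀ i, 0 ≤ P0 i)
    (hover : E ^ 2 * gl / 4 < ∑ i, P0 i)
    (g : ℝ → Fin n → ℝ)
    (hnonneg : ∀ t : ℝ, 0 ≤ t → ∀ i : Fin n, 0 ≤ g t i)
    (hdyn : ∀ t : ℝ, 0 ≤ t → ∀ i : Fin n,
      HasDerivAt (fun s => g s i)
        (P0 i - (E * gl / ((∑ j, g t j) + gl)) ^ 2 * g t i) t) :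
    Filter.Tendsto (fun t => ∑ i, g t i) Filter.atTop Filter.atTop ∧
    Filter.Tendsto (fun t => E * gl / ((∑ i, g t i) + gl)) Filter.atTop (nhds 0) :=
  stmt_2_general hgl.le hover ((eventually_ge_atTop 0).mono hdyn)
end

section
/- (Equilibrium Characterization, supply below capacity) Let E>0, g_l>0, n ≥ 1, and P_{0,i} ≥ 0 with 0 < Σᵢ P_{0,i} < E²·g_l/4. Then there exist exactly two vectors g* ∈ ℝⁿ_{≥0} satisfying the equilibrium equations v(g*)²·g*ᵢ = P_{0,i} for all i = 1,…,n, where v(g) = E·g_l/(Σⱼ gⱼ + g_l); denoting them g₁* and g₂*, their total conductances satisfy Σᵢ (g₁*)ᵢ < g_l < Σᵢ (g₂*)ᵢ. -/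
/-!
Summing the equilibrium equations `v² gᵢ = Pᵢ` shows that an equilibrium is the demand vector `P`
scaled so that its total conductance `s` satisfies `v(s)² s = ∑ᵢ Pᵢ`. This scalar equation is
invariant under `s ↦ gl² / s`, and it has no other coincidences: clearing denominators in
`v(x)² x = v(s)² s` gives `(x - s) (x s - gl²) = 0`. Below capacity the intermediate value theorem
yields a root `s` in `(0, gl)`, whose mirror image `gl² / s` lies above `gl`.
-/

open Set

section Allocation

variable {ι K : Type*} [Fintype ι] [Field K] {P : ι → K}

lemma sum_div_sum_smul (hP : ∑ i, P i ≠ 0) (s : K) : ∑ i, ((s / ∑ j, P j) • P) i = s := by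
  simp only [Pi.smul_apply, smul_eq_mul, ← Finset.mul_sum, div_mul_cancel₀ s hP]

lemma forall_mul_eq_iff_exists_eq_div_sum_smul (hP : ∑ i, P i ≠ 0) (w : K → K) (g : ι → K) :
    (∀ i, w (∑ j, g j) * g i = P i) ↔ ∃ s, w s * s = ∑ i, P i ∧ g = (s / ∑ i, P i) • P := by
  constructor
  · intro h
    have total : w (∑ i, g i) * ∑ i, g i = ∑ i, P i := by
      rw [Finset.mul_sum]
      exact Finset.sum_congr rfl fun i _ => h i
    refine ⟨∑ i, g i, total, funext fun i => ?_⟩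
    rw [Pi.smul_apply, smul_eq_mul, div_mul_eq_mul_div, eq_div_iff hP, ← total, ← h i]
    ring
  · rintro ⟨s, hs, rfl⟩ i
    rw [sum_div_sum_smul hP, Pi.smul_apply, smul_eq_mul, ← mul_assoc, ← mul_div_assoc, hs,
      div_self hP, one_mul]

end Allocation

/-- The load voltage of the star network with source voltage `E` and line conductance `gl`,
as a function of the total load conductance `s`; it takes the junk value `0` at `s = -gl`. -/
noncomputable def starVoltage (E gl s : ℝ) : ℝ := E * gl / (s + gl)

/-- The total power delivered to the loads of the star network when their total conductance
is `s`. -/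
noncomputable def starPower (E gl s : ℝ) : ℝ := starVoltage E gl s ^ 2 * s

/-- The conductance vector `g` is a stationary point of the inflexible-load dynamics with nominal
demands `P`. No sign is imposed on `g` or `P`. -/
def IsStarEquilibrium {ι : Type*} [Fintype ι] (E gl : ℝ) (P g : ι → ℝ) : Prop :=
  ∀ i, starVoltage E gl (∑ j, g j) ^ 2 * g i = P i

section StarPower

variable {E gl s : ℝ}

lemma starPower_ne_zero_iff :
    starPower E gl s ≠ 0 ↔ E ≠ 0 ∧ gl ≠ 0 ∧ s + gl ≠ 0 ∧ s ≠ 0 := by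
  simp [starPower, starVoltage, and_assoc]

lemma starPower_sq_div (hgl : gl ≠ 0) (hs : s ≠ 0) :
    starPower E gl (gl ^ 2 / s) = starPower E gl s := by
  have hden : gl ^ 2 / s + gl = gl / s * (s + gl) := by
    field_simp
    ring
  rw [starPower, starPower, starVoltage, starVoltage, hden]
  field_simp

lemma starPower_eq_starPower_iff (h : starPower E gl s ≠ 0) (x : ℝ) :
    starPower E gl x = starPower E gl s ↔ x = s ∨ x = gl ^ 2 / s := by
  obtain ⟨hE, hgl, hsgl, hs⟩ := starPower_ne_zero_iff.1 h
  constructor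
  · intro hx
    obtain ⟨-, -, hxgl, -⟩ := starPower_ne_zero_iff.1 (hx ▸ h)
    have cleared : x * (s + gl) ^ 2 = (x + gl) ^ 2 * s := by
      unfold starPower starVoltage at hx
      field_simp at hx
      exact hx
    have factored : (x - s) * (x * s - gl ^ 2) = 0 := by linear_combination -cleared
    refine (mul_eq_zero.1 factored).imp sub_eq_zero.1 fun hprod => ?_
    exact (eq_div_iff hs).2 (sub_eq_zero.1 hprod)
  · rintro (rfl | rfl)
    exacts [rfl, starPower_sq_div hgl hs]

lemma starPower_self (hgl : gl ≠ 0) : starPower E gl gl = E ^ 2 * gl / 4 := by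
  rw [starPower, starVoltage]
  field_simp
  norm_num

lemma continuousOn_starPower (hgl : 0 < gl) : ContinuousOn (starPower E gl) (Ici 0) := by
  have hden : ∀ s ∈ Ici (0 : ℝ), s + gl ≠ 0 := fun s hs => (add_pos_of_nonneg_of_pos hs hgl).ne'
  unfold starPower starVoltage
  fun_prop (disch := assumption)

lemma exists_mem_Ioo_starPower_eq {p : ℝ} (hgl : 0 < gl) (hp : 0 < p) (hcap : p < E ^ 2 * gl / 4) :
    ∃ s ∈ Ioo 0 gl, starPower E gl s = p := by
  refine intermediate_value_Ioo hgl.le ((continuousOn_starPower hgl).mono Icc_subset_Ici_self) ?_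
  rw [starPower_self hgl.ne', starPower, mul_zero]
  exact ⟨hp, hcap⟩

lemma exists_forall_starPower_eq_iff {p : ℝ} (hgl : 0 < gl) (hp : 0 < p)
    (hcap : p < E ^ 2 * gl / 4) :
    ∃ s t, 0 < s ∧ s < gl ∧ gl < t ∧ ∀ x, starPower E gl x = p ↔ x = s ∨ x = t := by
  obtain ⟨s, ⟨hs, s_lt⟩, rfl⟩ := exists_mem_Ioo_starPower_eq hgl hp hcap
  have lt_mirror : gl < gl ^ 2 / s := by
    rw [lt_div_iff₀ hs, sq]
    exact mul_lt_mul_of_pos_left s_lt hgl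
  exact ⟨s, gl ^ 2 / s, hs, s_lt, lt_mirror, starPower_eq_starPower_iff hp.ne'⟩

end StarPower

section Equilibria

variable {ι : Type*} [Fintype ι] {E gl : ℝ} {P : ι → ℝ}

lemma isStarEquilibrium_iff (hP : ∑ i, P i ≠ 0) (g : ι → ℝ) :
    IsStarEquilibrium E gl P g ↔
      ∃ s, starPower E gl s = ∑ i, P i ∧ g = (s / ∑ i, P i) • P :=
  forall_mul_eq_iff_exists_eq_div_sum_smul hP (fun s => starVoltage E gl s ^ 2) g

theorem stmt_4_general (hgl : 0 < gl) (hpos : 0 < ∑ i, P i) (hcap : ∑ i, P i < E ^ 2 * gl / 4) :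
    ∃ g₁ g₂ : ι → ℝ,
      g₁ ≠ g₂ ∧
      (∀ i, 0 ≤ g₁ i ↔ 0 ≤ P i) ∧ (∀ i, 0 ≤ g₂ i ↔ 0 ≤ P i) ∧
      IsStarEquilibrium E gl P g₁ ∧ IsStarEquilibrium E gl P g₂ ∧
      ∑ i, g₁ i < gl ∧ gl < ∑ i, g₂ i ∧
      ∀ g, IsStarEquilibrium E gl P g → g = g₁ ∨ g = g₂ := by
  obtain ⟨s, t, hs, s_lt, lt_t, hroots⟩ := exists_forall_starPower_eq_iff hgl hpos hcap
  have total := sum_div_sum_smul hpos.ne'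
  have nonneg_iff {c : ℝ} (hc : 0 < c) (i : ι) : 0 ≤ ((c / ∑ j, P j) • P) i ↔ 0 ≤ P i :=
    mul_nonneg_iff_of_pos_left (div_pos hc hpos)
  have equilibrium_iff (g : ι → ℝ) : IsStarEquilibrium E gl P g ↔
      g = (s / ∑ i, P i) • P ∨ g = (t / ∑ i, P i) • P := by
    simp only [isStarEquilibrium_iff hpos.ne', hroots, or_and_right, exists_or, exists_eq_left]
  refine ⟨(s / ∑ i, P i) • P, (t / ∑ i, P i) • P, ?ne, nonneg_iff hs,
    nonneg_iff (hgl.trans lt_t), (equilibrium_iff _).2 (.inl rfl),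
    (equilibrium_iff _).2 (.inr rfl), ?lt, ?gt, fun g => (equilibrium_iff g).1⟩
  case ne =>
    intro heq
    have same_total : s = t := (total s).symm.trans (heq ▸ total t)
    exact (s_lt.trans lt_t).ne same_total
  case lt => rwa [total]
  case gt => rwa [total]

end Equilibria

/-- Equilibrium characterization below capacity: when `0 < Σᵢ P₀ᵢ < E²·g_l/4`, there exist
exactly two nonnegative equilibria `g₁*, g₂*` of the inflexible-load dynamics, with total
conductances satisfying `Σᵢ (g₁*)ᵢ < g_l < Σᵢ (g₂*)ᵢ`. -/
theorem stmt_4 (E gl : ℝ) (hE : 0 < E) (hgl : 0 < gl) (n : ℕ) (hn : 1 ≤ n)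
    (P0 : Fin n → ℝ) (hP0 : ∀ i, 0 ≤ P0 i)
    (hpos : 0 < ∑ i, P0 i) (hcap : ∑ i, P0 i < E ^ 2 * gl / 4) :
    ∃ g₁ g₂ : Fin n → ℝ,
      g₁ ≠ g₂ ∧
      (∀ i, 0 ≤ g₁ i) ∧ (∀ i, 0 ≤ g₂ i) ∧
      (∀ i, (E * gl / ((∑ j, g₁ j) + gl)) ^ 2 * g₁ i = P0 i) ∧
      (∀ i, (E * gl / ((∑ j, g₂ j) + gl)) ^ 2 * g₂ i = P0 i) ∧
      (∑ i, g₁ i) < gl ∧ gl < (∑ i, g₂ i) ∧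
      (∀ g : Fin n → ℝ, (∀ i, 0 ≤ g i) →
        (∀ i, (E * gl / ((∑ j, g j) + gl)) ^ 2 * g i = P0 i) →
        g = g₁ ∨ g = g₂) := by
  obtain ⟨g₁, g₂, hne, h₁, h₂, hequil₁, hequil₂, hlt, hgt, hunique⟩ :=
    stmt_4_general hgl hpos hcap
  exact ⟨g₁, g₂, hne, fun i => (h₁ i).2 (hP0 i), fun i => (h₂ i).2 (hP0 i), hequil₁, hequil₂,
    hlt, hgt, fun g _ => hunique g⟩
end

section
/- (Stable Region Characterization) Let E>0, g_l>0, n ≥ 1, g* ∈ ℝⁿ_{≥0}, ḡ* = Σᵢ g*ᵢ, v* = E·g_l/(ḡ* + g_l), and let J(g*) = (2v*²/(ḡ*+g_l))·g*·𝟙ⁿᵀ − v*²·Iₙ be the Jacobian of the inflexible-load dynamics at g*. Then all eigenvalues of J(g*) have negative real part (i.e., J(g*) is Hurwitz, so the equilibrium is asymptotically stable by linearization) if and only if ḡ* < g_l. -/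
/-!
The Jacobian is a rank-one matrix minus a scalar: with `w = v*²`, it is `u 𝟙ᵀ - w I`, where
`u = (2w / (ḡ* + g_l)) g*`. The only possible nonzero eigenvalue of `u 𝟙ᵀ` is
`𝟙ᵀu = 2w ḡ* / (ḡ* + g_l)`, and the zero eigenvalue only contributes `-w < 0`. So stability amounts
to `𝟙ᵀu < w`, that is to `w (ḡ* - g_l) / (ḡ* + g_l) < 0`.
-/

open Matrix

section RankOne

variable {ι : Type*} [Fintype ι] [DecidableEq ι]

theorem mem_spectrum_vecMulVec_iff {K : Type*} [Field K] {u v : ι → K} {μ : K} (hμ : μ ≠ 0) :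
    μ ∈ spectrum K (vecMulVec u v) ↔ μ = u ⬝ᵥ v := by
  cases isEmpty_or_nonempty ι
  · simpa [spectrum.of_subsingleton] using hμ
  have hcard : Fintype.card ι = Fintype.card ι - 1 + 1 := (Nat.sub_add_cancel NeZero.one_le).symm
  rw [mem_spectrum_iff_isRoot_charpoly, charpoly_vecMulVec, Polynomial.IsRoot.def, hcard]
  simp [pow_succ', ← sub_mul, sub_eq_zero, hμ]

/-- A complex matrix is Hurwitz if its spectrum lies in the open left half-plane; for the
linearization of a dynamical system at an equilibrium, this gives asymptotic stability. -/
def IsHurwitz (A : Matrix ι ι ℂ) : Prop :=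
  ∀ μ ∈ spectrum ℂ A, μ.re < 0

theorem isHurwitz_sub_algebraMap_iff {A : Matrix ι ι ℂ} {a : ℂ} :
    IsHurwitz (A - algebraMap ℂ _ a) ↔ ∀ μ ∈ spectrum ℂ A, μ.re < a.re := by
  simp [IsHurwitz, ← spectrum.sub_singleton_eq]

theorem isHurwitz_vecMulVec_sub_algebraMap_iff {u v : ι → ℂ} {a : ℂ} (ha : 0 < a.re) :
    IsHurwitz (vecMulVec u v - algebraMap ℂ _ a) ↔ (u ⬝ᵥ v).re < a.re := by
  rw [isHurwitz_sub_algebraMap_iff]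
  constructor
  · intro h
    by_cases huv : u ⬝ᵥ v = 0
    · simpa [huv] using ha
    · exact h _ ((mem_spectrum_vecMulVec_iff huv).mpr rfl)
  · intro h μ hμ
    by_cases hμ₀ : μ = 0
    · simpa [hμ₀] using ha
    · rwa [(mem_spectrum_vecMulVec_iff hμ₀).mp hμ]

end RankOne

theorem two_mul_div_add_mul_lt_self_iff {K : Type*} [Field K] [LinearOrder K]
    [IsStrictOrderedRing K] {a b w : K} (hw : 0 < w) (hab : a + b ≠ 0) :
    2 * w / (a + b) * a < w ↔ |a| < |b| := by
  have hfactor : w - 2 * w / (a + b) * a = w / (a + b) ^ 2 * (b ^ 2 - a ^ 2) := by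
    field_simp
    ring
  have hpos : 0 < w / (a + b) ^ 2 := by positivity
  rw [← sub_pos, hfactor, mul_pos_iff_of_pos_left hpos, sub_pos, sq_lt_sq]

theorem stmt_9_general {ι : Type*} [Fintype ι] [DecidableEq ι] {E gl : ℝ} (hE : E ≠ 0)
    (hgl : gl ≠ 0) {g : ι → ℝ} (hg : (∑ k, g k) + gl ≠ 0) {J : Matrix ι ι ℝ}
    (hJ : ∀ i j, J i j =
      (2 * (E * gl / ((∑ k, g k) + gl)) ^ 2 / ((∑ k, g k) + gl)) * g i -
        if i = j then (E * gl / ((∑ k, g k) + gl)) ^ 2 else 0) :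
    IsHurwitz (J.map (Complex.ofReal : ℝ → ℂ)) ↔ |∑ i, g i| < |gl| := by
  have hw : 0 < (E * gl / ((∑ k, g k) + gl)) ^ 2 := by positivity
  rw [← two_mul_div_add_mul_lt_self_iff hw hg]
  generalize (E * gl / ((∑ k, g k) + gl)) ^ 2 = w at hJ hw ⊢
  generalize 2 * w / ((∑ k, g k) + gl) = c at hJ ⊢
  have hrank : J.map (Complex.ofReal : ℝ → ℂ) =
      vecMulVec (fun i ↦ ((c * g i : ℝ) : ℂ)) 1 - algebraMap ℂ _ (w : ℂ) := by
    ext i j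
    simp [hJ, algebraMap_matrix_apply, apply_ite Complex.ofReal]
  have hdot : (fun i ↦ ((c * g i : ℝ) : ℂ)) ⬝ᵥ 1 = ((c * ∑ i, g i : ℝ) : ℂ) := by
    simp [dotProduct_one, Finset.mul_sum]
  rw [hrank, isHurwitz_vecMulVec_sub_algebraMap_iff (by simpa using hw), hdot,
    Complex.ofReal_re, Complex.ofReal_re]

/-- Stable region characterization: the Jacobian
`J(g*) = (2v*²/(ḡ*+g_l))·g*·𝟙ᵀ − v*²·I` of the inflexible-load dynamics is Hurwitz
(all eigenvalues have negative real part) if and only if `ḡ* = Σᵢ g*ᵢ < g_l`. -/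
theorem stmt_9 (E gl : ℝ) (hE : 0 < E) (hgl : 0 < gl) (n : ℕ) (hn : 1 ≤ n)
    (g : Fin n → ℝ) (hg : ∀ i, 0 ≤ g i)
    (J : Matrix (Fin n) (Fin n) ℝ)
    (hJ : ∀ i j, J i j =
      (2 * (E * gl / ((∑ k, g k) + gl)) ^ 2 / ((∑ k, g k) + gl)) * g i -
        if i = j then (E * gl / ((∑ k, g k) + gl)) ^ 2 else 0) :
    (∀ μ ∈ spectrum ℂ (J.map (Complex.ofReal : ℝ → ℂ)), μ.re < 0) ↔
      (∑ i, g i) < gl := by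
  have hsum : 0 ≤ ∑ k, g k := Finset.sum_nonneg fun i _ ↦ hg i
  simpa only [IsHurwitz, abs_of_nonneg hsum, abs_of_pos hgl] using
    stmt_9_general hE.ne' hgl.ne' (by positivity) hJ
end
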